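/- Let d, p ≥ 1 and let (X, Y) be a random vector with X valued in ℝ^d and Y in ℝ^p, satisfying E‖X‖ < ∞, E‖Y‖ < ∞ and E[‖X‖·‖Y‖] < ∞. Define V²(X,Y) = ∫_{ℝ^d × ℝ^p} |φ_{X,Y}(t,s) − φ_X(t)·φ_Y(s)|² w_{d,p}(t,s) dt ds, and analogously V²(X,X) = ∫_{ℝ^d × ℝ^d} |φ_{X,X}(t,s) − φ_X(t)·φ_X(s)|² w_{d,d}(t,s) dt ds and V²(Y,Y) with weight w_{p,p}. If V²(X,X)·V²(Y,Y) > 0, then the distance correlation R²(X,Y) = V²(X,Y)/√(V²(X,X)·V²(Y,Y)) satisfies 0 ≤ R²(X,Y) ≤ 1; equivalently, V²(X,Y)² ≤ V²(X,X)·V²(Y,Y). -/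

import Mathlib

open MeasureTheory ProbabilityTheory Complex
open scoped RealInnerProductSpace ENNReal BigOperators

/-- The constant `c_l = π^{(1+l)/2} / Γ((1+l)/2)`. -/
noncomputable def cConst (l : ℕ) : ℝ :=
  Real.pi ^ ((1 + (l : ℝ)) / 2) / Real.Gamma ((1 + (l : ℝ)) / 2)

/-- The weight function `w_{a,b}(t,s) = (c_a c_b ‖t‖^{1+a} ‖s‖^{1+b})⁻¹`. -/
noncomputable def dCovWeight (a b : ℕ)
    (t : EuclideanSpace ℝ (Fin a)) (s : EuclideanSpace ℝ (Fin b)) : ℝ :=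
  (cConst a * cConst b * ‖t‖ ^ (1 + a) * ‖s‖ ^ (1 + b))⁻¹

/-- The squared distance covariance
`V²(X,Y) = ∫ |φ_{X,Y}(t,s) − φ_X(t) φ_Y(s)|² w_{a,b}(t,s) dt ds`, as an extended real. -/
noncomputable def distCov2 (a b : ℕ) {Ω : Type*} [MeasurableSpace Ω] (P : Measure Ω)
    (X : Ω → EuclideanSpace ℝ (Fin a)) (Y : Ω → EuclideanSpace ℝ (Fin b)) : ℝ≥0∞ :=
  ∫⁻ ts : EuclideanSpace ℝ (Fin a) × EuclideanSpace ℝ (Fin b),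
    ENNReal.ofReal
      (‖(∫ ω, Complex.exp (Complex.I * ((⟪ts.1, X ω⟫ + ⟪ts.2, Y ω⟫ : ℝ) : ℂ)) ∂P)
          - (∫ ω, Complex.exp (Complex.I * ((⟪ts.1, X ω⟫ : ℝ) : ℂ)) ∂P)
            * ∫ ω, Complex.exp (Complex.I * ((⟪ts.2, Y ω⟫ : ℝ) : ℂ)) ∂P‖ ^ 2
        * dCovWeight a b ts.1 ts.2)

section Aux

variable {Ω T S : Type*} [MeasurableSpace Ω] [MeasurableSpace T] [MeasurableSpace S]

/-- The kernel `K_f(ω, ω') = ∫ f_t(ω) conj(f_t(ω')) dμ(t)`. -/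
noncomputable def auxKer (μ : Measure T) (f : T → Ω → ℂ) (z : Ω × Ω) : ℂ :=
  ∫ t, f t z.1 * (starRingEnd ℂ) (f t z.2) ∂μ

lemma auxKer_meas (μ : Measure T) [SFinite μ] (f : T → Ω → ℂ)
    (hf : Measurable (Function.uncurry f)) : StronglyMeasurable (auxKer μ f) := by
  unfold auxKer
  apply StronglyMeasurable.integral_prod_right
  apply Measurable.stronglyMeasurable
  have h1 : Measurable (fun q : (Ω × Ω) × T => f q.2 q.1.1) :=
    hf.comp (by fun_prop : Measurable (fun q : (Ω × Ω) × T => (q.2, q.1.1)))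
  have h2 : Measurable (fun q : (Ω × Ω) × T => f q.2 q.1.2) :=
    hf.comp (by fun_prop : Measurable (fun q : (Ω × Ω) × T => (q.2, q.1.2)))
  exact h1.mul (Complex.continuous_conj.measurable.comp h2)

lemma auxKer_bound (μ : Measure T) [IsFiniteMeasure μ] (f : T → Ω → ℂ) (C : ℝ)
    (hC : ∀ t ω, ‖f t ω‖ ≤ C) (z : Ω × Ω) : ‖auxKer μ f z‖ ≤ C * C * μ.real Set.univ := by
  unfold auxKer
  apply norm_integral_le_of_norm_le_const
  filter_upwards with t
  rw [norm_mul, RCLike.norm_conj]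
  have := hC t z.1
  exact mul_le_mul this (hC t z.2) (norm_nonneg _) ((norm_nonneg _).trans this)

lemma aux_identity (P : Measure Ω) [IsProbabilityMeasure P]
    (μ : Measure T) (ν : Measure S) [IsFiniteMeasure μ] [IsFiniteMeasure ν]
    (f : T → Ω → ℂ) (g : S → Ω → ℂ)
    (hf : Measurable (Function.uncurry f)) (hg : Measurable (Function.uncurry g)) (C : ℝ)
    (hfC : ∀ t ω, ‖f t ω‖ ≤ C) (hgC : ∀ t ω, ‖g t ω‖ ≤ C) :
    ((∫ q : T × S, ‖∫ ω, f q.1 ω * g q.2 ω ∂P‖ ^ 2 ∂(μ.prod ν) : ℝ) : ℂ)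
      = ∫ z : Ω × Ω, auxKer μ f z * auxKer ν g z ∂(P.prod P) := by
  have e1 : ∀ q : T × S, (((‖∫ ω, f q.1 ω * g q.2 ω ∂P‖ ^ 2 : ℝ)) : ℂ)
      = ∫ z : Ω × Ω, (f q.1 z.1 * g q.2 z.1) * (starRingEnd ℂ) (f q.1 z.2 * g q.2 z.2)
          ∂(P.prod P) := by
    intro q
    rw [integral_prod_mul (fun ω => f q.1 ω * g q.2 ω)
      (fun ω => (starRingEnd ℂ) (f q.1 ω * g q.2 ω)), integral_conj, Complex.mul_conj,
      Complex.normSq_eq_norm_sq]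
  have e2 : ∀ z : Ω × Ω, auxKer μ f z * auxKer ν g z
      = ∫ q : T × S, (f q.1 z.1 * g q.2 z.1) * (starRingEnd ℂ) (f q.1 z.2 * g q.2 z.2)
          ∂(μ.prod ν) := by
    intro z
    unfold auxKer
    rw [← integral_prod_mul]
    congr 1
    ext q
    rw [map_mul]
    ring
  rw [← integral_complex_ofReal]
  simp_rw [e1, e2]
  apply integral_integral_swap
  have m1 : Measurable (fun q : (T × S) × (Ω × Ω) => f q.1.1 q.2.1) :=
    hf.comp (by fun_prop : Measurable (fun q : (T × S) × (Ω × Ω) => (q.1.1, q.2.1)))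
  have m2 : Measurable (fun q : (T × S) × (Ω × Ω) => f q.1.1 q.2.2) :=
    hf.comp (by fun_prop : Measurable (fun q : (T × S) × (Ω × Ω) => (q.1.1, q.2.2)))
  have m3 : Measurable (fun q : (T × S) × (Ω × Ω) => g q.1.2 q.2.1) :=
    hg.comp (by fun_prop : Measurable (fun q : (T × S) × (Ω × Ω) => (q.1.2, q.2.1)))
  have m4 : Measurable (fun q : (T × S) × (Ω × Ω) => g q.1.2 q.2.2) :=
    hg.comp (by fun_prop : Measurable (fun q : (T × S) × (Ω × Ω) => (q.1.2, q.2.2)))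
  refine Integrable.of_bound (C := (C * C) * (C * C)) ?_ ?_
  · exact ((m1.mul m3).mul
      (Complex.continuous_conj.measurable.comp (m2.mul m4))).aestronglyMeasurable
  · filter_upwards with q
    have hb : ∀ ω, ‖f q.1.1 ω * g q.1.2 ω‖ ≤ C * C := fun ω => by
      rw [norm_mul]
      exact mul_le_mul (hfC _ _) (hgC _ _) (norm_nonneg _) ((norm_nonneg _).trans (hfC q.1.1 ω))
    simp only [Function.uncurry]
    rw [norm_mul, RCLike.norm_conj]
    exact mul_le_mul (hb _) (hb _) (norm_nonneg _) (mul_self_nonneg _)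

lemma aux_self (P : Measure Ω) [IsProbabilityMeasure P]
    (μ : Measure T) [IsFiniteMeasure μ] (f : T → Ω → ℂ)
    (hf : Measurable (Function.uncurry f)) (C : ℝ) (hfC : ∀ t ω, ‖f t ω‖ ≤ C) :
    (∫ q : T × T, ‖∫ ω, f q.1 ω * (starRingEnd ℂ) (f q.2 ω) ∂P‖ ^ 2 ∂(μ.prod μ))
      = ∫ z : Ω × Ω, ‖auxKer μ f z‖ ^ 2 ∂(P.prod P) := by
  have h := aux_identity P μ μ f (fun t ω => (starRingEnd ℂ) (f t ω)) hf
    (Complex.continuous_conj.measurable.comp hf) C hfC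
    (fun t ω => by rw [RCLike.norm_conj]; exact hfC t ω)
  have e : ∀ z : Ω × Ω, auxKer μ f z * auxKer μ (fun t ω => (starRingEnd ℂ) (f t ω)) z
      = ((‖auxKer μ f z‖ ^ 2 : ℝ) : ℂ) := by
    intro z
    have : auxKer μ (fun t ω => (starRingEnd ℂ) (f t ω)) z = (starRingEnd ℂ) (auxKer μ f z) := by
      unfold auxKer
      rw [← integral_conj]
      simp only [map_mul]
    rw [this, Complex.mul_conj, Complex.normSq_eq_norm_sq]
  simp_rw [e] at h
  rw [integral_complex_ofReal] at h
  exact_mod_cast h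

lemma aux_finite (P : Measure Ω) [IsProbabilityMeasure P]
    (μ : Measure T) (ν : Measure S) [IsFiniteMeasure μ] [IsFiniteMeasure ν]
    (f : T → Ω → ℂ) (g : S → Ω → ℂ)
    (hf : Measurable (Function.uncurry f)) (hg : Measurable (Function.uncurry g)) (C : ℝ)
    (hfC : ∀ t ω, ‖f t ω‖ ≤ C) (hgC : ∀ t ω, ‖g t ω‖ ≤ C) :
    (∫ q : T × S, ‖∫ ω, f q.1 ω * g q.2 ω ∂P‖ ^ 2 ∂(μ.prod ν)) ^ 2
      ≤ (∫ q : T × T, ‖∫ ω, f q.1 ω * (starRingEnd ℂ) (f q.2 ω) ∂P‖ ^ 2 ∂(μ.prod μ))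
        * (∫ q : S × S, ‖∫ ω, g q.1 ω * (starRingEnd ℂ) (g q.2 ω) ∂P‖ ^ 2 ∂(ν.prod ν)) := by
  rw [aux_self P μ f hf C hfC, aux_self P ν g hg C hgC]
  set A := ∫ q : T × S, ‖∫ ω, f q.1 ω * g q.2 ω ∂P‖ ^ 2 ∂(μ.prod ν) with hA
  have hA0 : 0 ≤ A := integral_nonneg fun q => by positivity
  have h := aux_identity P μ ν f g hf hg C hfC hgC
  have h1 : A ≤ ∫ z, ‖auxKer μ f z‖ * ‖auxKer ν g z‖ ∂(P.prod P) := by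
    calc A = ‖(A : ℂ)‖ := by rw [Complex.norm_real, Real.norm_of_nonneg hA0]
      _ ≤ _ := by
        rw [hA, h]
        refine (norm_integral_le_integral_norm _).trans (le_of_eq ?_)
        simp only [norm_mul]
  have hK : MemLp (fun z => ‖auxKer μ f z‖) (ENNReal.ofReal 2) (P.prod P) :=
    MemLp.of_bound (auxKer_meas μ f hf).norm.aestronglyMeasurable _
      (Filter.Eventually.of_forall fun z => by
        rw [norm_norm]; exact auxKer_bound μ f C hfC z)
  have hL : MemLp (fun z => ‖auxKer ν g z‖) (ENNReal.ofReal 2) (P.prod P) :=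
    MemLp.of_bound (auxKer_meas ν g hg).norm.aestronglyMeasurable _
      (Filter.Eventually.of_forall fun z => by
        rw [norm_norm]; exact auxKer_bound ν g C hgC z)
  have h2 := integral_mul_le_Lp_mul_Lq_of_nonneg Real.HolderConjugate.two_two
    (Filter.Eventually.of_forall fun z => norm_nonneg (auxKer μ f z))
    (Filter.Eventually.of_forall fun z => norm_nonneg (auxKer ν g z)) hK hL
  simp only [Real.rpow_two] at h2
  rw [← Real.sqrt_eq_rpow, ← Real.sqrt_eq_rpow] at h2
  have h3 := pow_le_pow_left₀ hA0 (h1.trans h2) 2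
  rwa [mul_pow, Real.sq_sqrt (integral_nonneg fun z => by positivity),
    Real.sq_sqrt (integral_nonneg fun z => by positivity)] at h3

lemma aux_meas (P : Measure Ω) [IsProbabilityMeasure P] (f : T → Ω → ℂ) (g : S → Ω → ℂ)
    (hf : Measurable (Function.uncurry f)) (hg : Measurable (Function.uncurry g)) :
    StronglyMeasurable (fun q : T × S => ∫ ω, f q.1 ω * g q.2 ω ∂P) := by
  apply StronglyMeasurable.integral_prod_right
  apply Measurable.stronglyMeasurable
  have m1 : Measurable (fun q : (T × S) × Ω => f q.1.1 q.2) :=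
    hf.comp (by fun_prop : Measurable (fun q : (T × S) × Ω => (q.1.1, q.2)))
  have m3 : Measurable (fun q : (T × S) × Ω => g q.1.2 q.2) :=
    hg.comp (by fun_prop : Measurable (fun q : (T × S) × Ω => (q.1.2, q.2)))
  exact m1.mul m3

lemma aux_ofReal (P : Measure Ω) [IsProbabilityMeasure P]
    (μ : Measure T) (ν : Measure S) [IsFiniteMeasure μ] [IsFiniteMeasure ν]
    (f : T → Ω → ℂ) (g : S → Ω → ℂ)
    (hf : Measurable (Function.uncurry f)) (hg : Measurable (Function.uncurry g)) (C : ℝ)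
    (hfC : ∀ t ω, ‖f t ω‖ ≤ C) (hgC : ∀ t ω, ‖g t ω‖ ≤ C) :
    ENNReal.ofReal (∫ q : T × S, ‖∫ ω, f q.1 ω * g q.2 ω ∂P‖ ^ 2 ∂(μ.prod ν))
      = ∫⁻ q : T × S, ENNReal.ofReal (‖∫ ω, f q.1 ω * g q.2 ω ∂P‖ ^ 2) ∂(μ.prod ν) := by
  apply ofReal_integral_eq_lintegral_ofReal
  · refine Integrable.of_bound (C := (C * C) ^ 2)
      ((aux_meas P f g hf hg).norm.pow 2).aestronglyMeasurable ?_
    filter_upwards with q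
    rw [norm_pow, norm_norm]
    refine pow_le_pow_left₀ (norm_nonneg _) ?_ 2
    have : ‖∫ ω, f q.1 ω * g q.2 ω ∂P‖ ≤ C * C * P.real Set.univ := by
      apply norm_integral_le_of_norm_le_const
      filter_upwards with ω
      rw [norm_mul]
      exact mul_le_mul (hfC _ _) (hgC _ _) (norm_nonneg _) ((norm_nonneg _).trans (hfC q.1 ω))
    simpa using this
  · filter_upwards with q
    positivity

lemma aux_sigmaFinite (P : Measure Ω) [IsProbabilityMeasure P]
    (μ : Measure T) (ν : Measure S) [SigmaFinite μ] [SigmaFinite ν]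
    (f : T → Ω → ℂ) (g : S → Ω → ℂ)
    (hf : Measurable (Function.uncurry f)) (hg : Measurable (Function.uncurry g)) (C : ℝ)
    (hfC : ∀ t ω, ‖f t ω‖ ≤ C) (hgC : ∀ t ω, ‖g t ω‖ ≤ C) :
    (∫⁻ q : T × S, ENNReal.ofReal (‖∫ ω, f q.1 ω * g q.2 ω ∂P‖ ^ 2) ∂(μ.prod ν)) ^ 2
      ≤ (∫⁻ q : T × T, ENNReal.ofReal (‖∫ ω, f q.1 ω * (starRingEnd ℂ) (f q.2 ω) ∂P‖ ^ 2)
            ∂(μ.prod μ))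
        * (∫⁻ q : S × S, ENNReal.ofReal (‖∫ ω, g q.1 ω * (starRingEnd ℂ) (g q.2 ω) ∂P‖ ^ 2)
            ∂(ν.prod ν)) := by
  set F : T × S → ℝ≥0∞ := fun q => ENNReal.ofReal (‖∫ ω, f q.1 ω * g q.2 ω ∂P‖ ^ 2)
  have hmono : Monotone (fun n => spanningSets μ n ×ˢ spanningSets ν n) := fun m n hmn =>
    Set.prod_mono (monotone_spanningSets μ hmn) (monotone_spanningSets ν hmn)
  have hU : (⋃ n, spanningSets μ n ×ˢ spanningSets ν n) = Set.univ := by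
    rw [Set.iUnion_prod_of_monotone (monotone_spanningSets μ) (monotone_spanningSets ν),
      iUnion_spanningSets, iUnion_spanningSets, Set.univ_prod_univ]
  have hsup : ∫⁻ q, F q ∂(μ.prod ν)
      = ⨆ n, ∫⁻ q in spanningSets μ n ×ˢ spanningSets ν n, F q ∂(μ.prod ν) := by
    rw [← setLIntegral_iUnion_of_directed F hmono.directed_le, hU, Measure.restrict_univ]
  rw [hsup, ← ENNReal.rpow_two, ← ENNReal.le_rpow_inv_iff (by norm_num : (0 : ℝ) < 2)]
  refine iSup_le fun n => ?_
  rw [ENNReal.le_rpow_inv_iff (by norm_num : (0 : ℝ) < 2), ENNReal.rpow_two]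
  have hfin1 : IsFiniteMeasure (μ.restrict (spanningSets μ n)) :=
    ⟨by rw [Measure.restrict_apply_univ]; exact measure_spanningSets_lt_top μ n⟩
  have hfin2 : IsFiniteMeasure (ν.restrict (spanningSets ν n)) :=
    ⟨by rw [Measure.restrict_apply_univ]; exact measure_spanningSets_lt_top ν n⟩
  have h := aux_finite P (μ.restrict (spanningSets μ n)) (ν.restrict (spanningSets ν n))
    f g hf hg C hfC hgC
  have h' := ENNReal.ofReal_le_ofReal h
  rw [ENNReal.ofReal_pow (integral_nonneg fun q => by positivity),
    ENNReal.ofReal_mul (integral_nonneg fun q => by positivity),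
    aux_ofReal P _ _ f g hf hg C hfC hgC,
    aux_ofReal P _ _ f (fun t ω => (starRingEnd ℂ) (f t ω)) hf
      (Complex.continuous_conj.measurable.comp hf) C hfC
      (fun t ω => by rw [RCLike.norm_conj]; exact hfC t ω),
    aux_ofReal P _ _ g (fun t ω => (starRingEnd ℂ) (g t ω)) hg
      (Complex.continuous_conj.measurable.comp hg) C hgC
      (fun t ω => by rw [RCLike.norm_conj]; exact hgC t ω)] at h'
  simp only [Measure.prod_restrict] at h'
  exact h'.trans (mul_le_mul' (setLIntegral_le_lintegral _ _) (setLIntegral_le_lintegral _ _))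

end Aux

/-- One-dimensional factor of the weight measure. -/
noncomputable def auxMeas (a : ℕ) : Measure (EuclideanSpace ℝ (Fin a)) :=
  volume.withDensity fun t => ENNReal.ofReal ((cConst a * ‖t‖ ^ (1 + a))⁻¹)

/-- The centred exponential. -/
noncomputable def auxF {a : ℕ} {Ω : Type*} [MeasurableSpace Ω] (P : Measure Ω)
    (X : Ω → EuclideanSpace ℝ (Fin a)) (t : EuclideanSpace ℝ (Fin a)) (ω : Ω) : ℂ :=
  Complex.exp (Complex.I * ((⟪t, X ω⟫ : ℝ) : ℂ))
    - ∫ ω, Complex.exp (Complex.I * ((⟪t, X ω⟫ : ℝ) : ℂ)) ∂P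

instance (a : ℕ) : SigmaFinite (auxMeas a) := SigmaFinite.withDensity_ofReal _

section Main

variable {a b : ℕ} {Ω : Type*} [MeasurableSpace Ω] (P : Measure Ω) [IsProbabilityMeasure P]
  (X : Ω → EuclideanSpace ℝ (Fin a)) (Y : Ω → EuclideanSpace ℝ (Fin b))

lemma aux_norm_exp (r : ℝ) : ‖Complex.exp (Complex.I * (r : ℂ))‖ = 1 := by
  rw [mul_comm]; exact Complex.norm_exp_ofReal_mul_I r

lemma auxE_meas (hX : Measurable X) :
    Measurable (fun q : EuclideanSpace ℝ (Fin a) × Ω =>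
      Complex.exp (Complex.I * ((⟪q.1, X q.2⟫ : ℝ) : ℂ))) := by
  have h : Measurable (fun q : EuclideanSpace ℝ (Fin a) × Ω => (⟪q.1, X q.2⟫ : ℝ)) :=
    measurable_fst.inner (hX.comp measurable_snd)
  fun_prop

lemma auxF_meas (hX : Measurable X) : Measurable (Function.uncurry (auxF P X)) := by
  have h := auxE_meas X hX
  have h2 := (StronglyMeasurable.integral_prod_right' (ν := P) h.stronglyMeasurable).measurable
  exact h.sub (h2.comp measurable_fst)

lemma aux_integrable (r : Ω → ℝ) (hr : Measurable r) :
    Integrable (fun ω => Complex.exp (Complex.I * (r ω : ℂ))) P := by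
  refine Integrable.of_bound (C := 1) ?_ ?_
  · exact (by fun_prop : Measurable fun ω => Complex.exp (Complex.I * (r ω : ℂ))).aestronglyMeasurable
  · filter_upwards with ω
    rw [aux_norm_exp]

lemma auxF_bound (t : EuclideanSpace ℝ (Fin a)) (ω : Ω) : ‖auxF P X t ω‖ ≤ 2 := by
  unfold auxF
  refine (norm_sub_le _ _).trans ?_
  rw [aux_norm_exp]
  have : ‖∫ ω, Complex.exp (Complex.I * ((⟪t, X ω⟫ : ℝ) : ℂ)) ∂P‖ ≤ 1 * P.real Set.univ := by
    apply norm_integral_le_of_norm_le_const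
    filter_upwards with ω
    rw [aux_norm_exp]
  simp at this
  linarith

lemma auxF_conj (t : EuclideanSpace ℝ (Fin a)) (ω : Ω) :
    (starRingEnd ℂ) (auxF P X t ω) = auxF P X (-t) ω := by
  have e : ∀ ω, (starRingEnd ℂ) (Complex.exp (Complex.I * ((⟪t, X ω⟫ : ℝ) : ℂ)))
      = Complex.exp (Complex.I * ((⟪-t, X ω⟫ : ℝ) : ℂ)) := by
    intro ω
    rw [← Complex.exp_conj, map_mul, Complex.conj_I, Complex.conj_ofReal, inner_neg_left]
    push_cast
    ring_nf
  unfold auxF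
  rw [map_sub, ← integral_conj]
  simp only [e]

lemma auxF_cov (hX : Measurable X) (hY : Measurable Y) (t : EuclideanSpace ℝ (Fin a))
    (s : EuclideanSpace ℝ (Fin b)) :
    ∫ ω, auxF P X t ω * auxF P Y s ω ∂P
      = (∫ ω, Complex.exp (Complex.I * ((⟪t, X ω⟫ + ⟪s, Y ω⟫ : ℝ) : ℂ)) ∂P)
          - (∫ ω, Complex.exp (Complex.I * ((⟪t, X ω⟫ : ℝ) : ℂ)) ∂P)
            * ∫ ω, Complex.exp (Complex.I * ((⟪s, Y ω⟫ : ℝ) : ℂ)) ∂P := by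
  have mX : Measurable (fun ω => (⟪t, X ω⟫ : ℝ)) := measurable_const.inner hX
  have mY : Measurable (fun ω => (⟪s, Y ω⟫ : ℝ)) := measurable_const.inner hY
  have iX := aux_integrable P _ mX
  have iY := aux_integrable P _ mY
  have iXY := aux_integrable P _ (mX.add mY)
  simp only [Pi.add_apply] at iXY
  unfold auxF
  set c := ∫ ω, Complex.exp (Complex.I * ((⟪t, X ω⟫ : ℝ) : ℂ)) ∂P with hc
  set e := ∫ ω, Complex.exp (Complex.I * ((⟪s, Y ω⟫ : ℝ) : ℂ)) ∂P with he
  have h : ∀ ω, (Complex.exp (Complex.I * ((⟪t, X ω⟫ : ℝ) : ℂ)) - c)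
        * (Complex.exp (Complex.I * ((⟪s, Y ω⟫ : ℝ) : ℂ)) - e)
      = Complex.exp (Complex.I * ((⟪t, X ω⟫ + ⟪s, Y ω⟫ : ℝ) : ℂ))
        - Complex.exp (Complex.I * ((⟪t, X ω⟫ : ℝ) : ℂ)) * e
        - (c * Complex.exp (Complex.I * ((⟪s, Y ω⟫ : ℝ) : ℂ)) - c * e) := by
    intro ω
    rw [Complex.ofReal_add, mul_add, Complex.exp_add]
    ring
  simp_rw [h]
  have j1 : Integrable (fun ω => Complex.exp (Complex.I * ((⟪t, X ω⟫ + ⟪s, Y ω⟫ : ℝ) : ℂ))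
        - Complex.exp (Complex.I * ((⟪t, X ω⟫ : ℝ) : ℂ)) * e) P := iXY.sub (iX.mul_const e)
  have j2 : Integrable (fun ω => c * Complex.exp (Complex.I * ((⟪s, Y ω⟫ : ℝ) : ℂ)) - c * e) P :=
    (iY.const_mul c).sub (integrable_const _)
  rw [integral_sub j1 j2,
    integral_sub iXY (iX.mul_const e), integral_sub (iY.const_mul c) (integrable_const _),
    integral_mul_const, integral_const_mul, ← hc, ← he]
  simp

lemma cConst_nonneg (l : ℕ) : 0 ≤ cConst l := by
  unfold cConst
  have : 0 < Real.Gamma ((1 + (l : ℝ)) / 2) := Real.Gamma_pos_of_pos (by positivity)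
  positivity

lemma distCov2_eq (hX : Measurable X) (hY : Measurable Y) :
    distCov2 a b P X Y
      = ∫⁻ q, ENNReal.ofReal (‖∫ ω, auxF P X q.1 ω * auxF P Y q.2 ω ∂P‖ ^ 2)
          ∂((auxMeas a).prod (auxMeas b)) := by
  have hm := (aux_meas P (auxF P X) (auxF P Y) (auxF_meas P X hX) (auxF_meas P Y hY)).measurable
  unfold auxMeas
  rw [prod_withDensity (by fun_prop) (by fun_prop),
    lintegral_withDensity_eq_lintegral_mul _ (by fun_prop) (by fun_prop)]
  unfold distCov2
  refine lintegral_congr fun q => ?_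
  have ha := cConst_nonneg a
  have hb := cConst_nonneg b
  rw [Pi.mul_apply, auxF_cov P X Y hX hY, ← ENNReal.ofReal_mul (by positivity),
    ← ENNReal.ofReal_mul (by positivity)]
  congr 1
  unfold dCovWeight
  rw [mul_comm, ← mul_inv]
  congr 2
  ring

lemma auxMeas_neg (a : ℕ) (G : EuclideanSpace ℝ (Fin a) → ℝ≥0∞) (hG : Measurable G) :
    ∫⁻ t, G (-t) ∂(auxMeas a) = ∫⁻ t, G t ∂(auxMeas a) := by
  unfold auxMeas
  rw [lintegral_withDensity_eq_lintegral_mul _ (by fun_prop) (by fun_prop),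
    lintegral_withDensity_eq_lintegral_mul _ (by fun_prop) hG,
    ← lintegral_neg_eq_self]
  simp only [Pi.mul_apply, norm_neg, neg_neg]

lemma auxMeas_prod_neg (a : ℕ)
    (G : EuclideanSpace ℝ (Fin a) × EuclideanSpace ℝ (Fin a) → ℝ≥0∞) (hG : Measurable G) :
    ∫⁻ q, G q ∂((auxMeas a).prod (auxMeas a))
      = ∫⁻ q, G (q.1, -q.2) ∂((auxMeas a).prod (auxMeas a)) := by
  have hG2 : Measurable fun q : EuclideanSpace ℝ (Fin a) × EuclideanSpace ℝ (Fin a) =>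
      G (q.1, -q.2) := hG.comp (measurable_fst.prodMk measurable_snd.neg)
  rw [lintegral_prod _ hG.aemeasurable, lintegral_prod _ hG2.aemeasurable]
  refine lintegral_congr fun t => ?_
  exact (auxMeas_neg a (fun s => G (t, s)) (hG.comp measurable_prodMk_left)).symm

lemma distCov2_self (hX : Measurable X) :
    distCov2 a a P X X
      = ∫⁻ q, ENNReal.ofReal (‖∫ ω, auxF P X q.1 ω * (starRingEnd ℂ) (auxF P X q.2 ω) ∂P‖ ^ 2)
          ∂((auxMeas a).prod (auxMeas a)) := by
  have hm := (aux_meas P (auxF P X) (auxF P X) (auxF_meas P X hX) (auxF_meas P X hX)).measurable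
  rw [distCov2_eq P X X hX hX, auxMeas_prod_neg a _ (hm.norm.pow_const 2).ennreal_ofReal]
  simp only [auxF_conj]

end Main

theorem stmt_2
    (d p : ℕ) (hd : 1 ≤ d) (hp : 1 ≤ p)
    {Ω : Type*} [MeasurableSpace Ω] (P : Measure Ω) [IsProbabilityMeasure P]
    (X : Ω → EuclideanSpace ℝ (Fin d)) (Y : Ω → EuclideanSpace ℝ (Fin p))
    (hX : Measurable X) (hY : Measurable Y)
    (hX1 : Integrable (fun ω => ‖X ω‖) P)
    (hY1 : Integrable (fun ω => ‖Y ω‖) P)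
    (hXY1 : Integrable (fun ω => ‖X ω‖ * ‖Y ω‖) P)
    (hpos : 0 < distCov2 d d P X X * distCov2 p p P Y Y) :
    (distCov2 d p P X Y) ^ 2 ≤ distCov2 d d P X X * distCov2 p p P Y Y
    ∧ 0 ≤ (distCov2 d p P X Y).toReal
        / Real.sqrt ((distCov2 d d P X X).toReal * (distCov2 p p P Y Y).toReal)
    ∧ (distCov2 d p P X Y).toReal
        / Real.sqrt ((distCov2 d d P X X).toReal * (distCov2 p p P Y Y).toReal) ≤ 1 := by
  have main : (distCov2 d p P X Y) ^ 2 ≤ distCov2 d d P X X * distCov2 p p P Y Y := by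
    rw [distCov2_eq P X Y hX hY, distCov2_self P X hX, distCov2_self P Y hY]
    exact aux_sigmaFinite P (auxMeas d) (auxMeas p) (auxF P X) (auxF P Y) (auxF_meas P X hX)
      (auxF_meas P Y hY) 2 (auxF_bound P X) (auxF_bound P Y)
  refine ⟨main, by positivity, ?_⟩
  by_cases htop : distCov2 d d P X X * distCov2 p p P Y Y = ⊤
  · rw [← ENNReal.toReal_mul, htop]
    simp
  · apply div_le_one_of_le₀ _ (Real.sqrt_nonneg _)
    apply Real.le_sqrt_of_sq_le
    rw [← ENNReal.toReal_mul, ← ENNReal.toReal_pow]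
    exact ENNReal.toReal_mono htop main
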